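/- Let F : P_1(ℝ) → ℝ be of class C^2. Then for every m ∈ P_1(ℝ) and all x, y ∈ ℝ: δ²F(m,x,y) − δF(m,x) = δ²F(m,y,x) − δF(m,y). -/

import Mathlib

open MeasureTheory Filter Topology

noncomputable section

/-- `π` is a coupling of the measures `m` and `μ` on `ℝ`. -/
def IsCoupling (π : Measure (ℝ × ℝ)) (m μ : Measure ℝ) : Prop :=
  π.map Prod.fst = m ∧ π.map Prod.snd = μ

/-- The Wasserstein distance of order one between two measures on `ℝ`:
the infimum over couplings `π` of `∫ |x - y| dπ(x,y)`. -/
def W1 (m μ : Measure ℝ) : ℝ :=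
  sInf {c : ℝ | ∃ π : Measure (ℝ × ℝ), IsCoupling π m μ ∧ c = ∫ p, |p.1 - p.2| ∂π}

/-- Membership in `P₁(ℝ)`: Borel probability measures on `ℝ` with finite first moment. -/
def MemP1 (m : Measure ℝ) : Prop :=
  IsProbabilityMeasure m ∧ Integrable (fun x => |x|) m

/-- Membership in `P([-K,K])`: probability measures supported in `[-K,K]`. -/
def MemPK (K : ℝ) (m : Measure ℝ) : Prop :=
  IsProbabilityMeasure m ∧ m (Set.Icc (-K) K)ᶜ = 0

/-- The convex combination `(1-t)·m₀ + t·m` of two measures. -/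
def lineSeg (m₀ m : Measure ℝ) (t : ℝ) : Measure ℝ :=
  ENNReal.ofReal (1 - t) • m₀ + ENNReal.ofReal t • m

/-- The integral of `f` against the signed difference `m - μ`:
`∫ f d(m - μ) = ∫ f dm - ∫ f dμ`. -/
def dInt (f : ℝ → ℝ) (m μ : Measure ℝ) : ℝ := (∫ x, f x ∂m) - ∫ x, f x ∂μ

/-- `W₁`-(sequential) compactness of a subset of `P₁(ℝ)`. -/
def W1Compact (𝒦 : Set (Measure ℝ)) : Prop :=
  (∀ m ∈ 𝒦, MemP1 m) ∧
  ∀ u : ℕ → Measure ℝ, (∀ n, u n ∈ 𝒦) →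
    ∃ m ∈ 𝒦, ∃ φ : ℕ → ℕ, StrictMono φ ∧
      Tendsto (fun n => W1 (u (φ n)) m) atTop (𝓝 0)

/-- Sublinearity in the real variable, uniformly over `W₁`-compact sets of measures. -/
def SublinearOnCompacts (G : Measure ℝ → ℝ → ℝ) : Prop :=
  ∀ 𝒦 : Set (Measure ℝ), W1Compact 𝒦 →
    ∃ C > 0, ∀ m ∈ 𝒦, ∀ x : ℝ, |G m x| ≤ C * (1 + |x|)

/-- `W₁`-continuity of a function of the measure variable at a point of `P₁(ℝ)`. -/
def W1ContinuousAt (g : Measure ℝ → ℝ) (m : Measure ℝ) : Prop :=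
  ∀ ε > 0, ∃ η > 0, ∀ μ, MemP1 μ → W1 μ m < η → |g μ - g m| < ε

/-- Joint continuity of `G : P₁(ℝ) × ℝ → ℝ`. -/
def JointlyContinuous (G : Measure ℝ → ℝ → ℝ) : Prop :=
  ∀ m x, MemP1 m → ∀ ε > 0, ∃ η > 0, ∀ μ y, MemP1 μ →
    W1 μ m < η → |y - x| < η → |G μ y - G m x| < ε

/-- Joint continuity of `G : P₁(ℝ) × ℝ × ℝ → ℝ`. -/
def JointlyContinuous2 (G : Measure ℝ → ℝ → ℝ → ℝ) : Prop :=
  ∀ m x y, MemP1 m → ∀ ε > 0, ∃ η > 0, ∀ μ x' y', MemP1 μ →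
    W1 μ m < η → |x' - x| < η → |y' - y| < η → |G μ x' y' - G m x y| < ε

/-- `H` is a version of the (linear functional) derivative of `F : P₁(ℝ) → ℝ`. -/
def IsDerivVersion (F : Measure ℝ → ℝ) (H : Measure ℝ → ℝ → ℝ) : Prop :=
  Measurable (Function.uncurry H) ∧
  SublinearOnCompacts H ∧
  ∀ m m₀, MemP1 m → MemP1 m₀ →
    F m - F m₀ = ∫ t in (0:ℝ)..1, dInt (H (lineSeg m₀ m t)) m m₀

/-- `H` is the canonical derivative of `F : P₁(ℝ) → ℝ`: the version of the derivative
satisfying `∫ H(μ,x) dμ(x) = 0` for every `μ ∈ P₁(ℝ)`. -/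
def IsCanonicalDeriv (F : Measure ℝ → ℝ) (H : Measure ℝ → ℝ → ℝ) : Prop :=
  IsDerivVersion F H ∧ ∀ μ, MemP1 μ → ∫ x, H μ x ∂μ = 0

/-- `G : P₁(ℝ) × ℝ → ℝ` is of class `C^{0,1}`. -/
def IsC01 (G : Measure ℝ → ℝ → ℝ) : Prop :=
  (∀ m, MemP1 m → ContDiff ℝ 1 (G m)) ∧
  (∀ x : ℝ, ∀ m, MemP1 m → W1ContinuousAt (fun μ => G μ x) m) ∧
  SublinearOnCompacts G ∧
  JointlyContinuous (fun m x => deriv (G m) x)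

/-- `F : P₁(ℝ) → ℝ` is of class `C¹` with canonical derivative `H`. -/
def IsC1 (F : Measure ℝ → ℝ) (H : Measure ℝ → ℝ → ℝ) : Prop :=
  IsCanonicalDeriv F H ∧ IsC01 H

/-- Joint continuity on `P([-K,K]) × [-K,K]`. -/
def JointlyContinuousOnK (K : ℝ) (G : Measure ℝ → ℝ → ℝ) : Prop :=
  ∀ m x, MemPK K m → x ∈ Set.Icc (-K) K → ∀ ε > 0, ∃ η > 0,
    ∀ μ y, MemPK K μ → y ∈ Set.Icc (-K) K → W1 μ m < η → |y - x| < η →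
      |G μ y - G m x| < ε

/-- Joint continuity on `P([-K,K]) × [-K,K]²`. -/
def JointlyContinuousOnK2 (K : ℝ) (G : Measure ℝ → ℝ → ℝ → ℝ) : Prop :=
  ∀ m x y, MemPK K m → x ∈ Set.Icc (-K) K → y ∈ Set.Icc (-K) K → ∀ ε > 0, ∃ η > 0,
    ∀ μ x' y', MemPK K μ → x' ∈ Set.Icc (-K) K → y' ∈ Set.Icc (-K) K →
      W1 μ m < η → |x' - x| < η → |y' - y| < η → |G μ x' y' - G m x y| < ε

end

/-- `F : P₁(ℝ) → ℝ` is of class `C²`, with canonical derivative `δF` and canonical second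
derivative `δ²F(m,x,y) = δ(δF_x)(m,y)`. -/
def IsC2 (F : Measure ℝ → ℝ) (δF : Measure ℝ → ℝ → ℝ)
    (δ2F : Measure ℝ → ℝ → ℝ → ℝ) : Prop :=
  IsCanonicalDeriv F δF ∧
  (∀ x : ℝ, IsCanonicalDeriv (fun m => δF m x) (fun m y => δ2F m x y)) ∧
  (∀ m, MemP1 m → W1ContinuousAt F m) ∧
  (∀ x : ℝ, ∀ m, MemP1 m → W1ContinuousAt (fun μ => δF μ x) m) ∧
  (∀ x y : ℝ, ∀ m, MemP1 m → W1ContinuousAt (fun μ => δ2F μ x y) m) ∧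
  (∀ m, MemP1 m → ContDiff ℝ 1 (δF m)) ∧
  (∀ m, MemP1 m → ContDiff ℝ 1 (fun p : ℝ × ℝ => δ2F m p.1 p.2)) ∧
  JointlyContinuous (fun m x => deriv (δF m) x) ∧
  JointlyContinuous2 (fun m x y => deriv (fun x' => δ2F m x' y) x) ∧
  JointlyContinuous2 (fun m x y => deriv (fun y' => δ2F m x y') y)

/-!
Perturb `m` to `μ (s, t) = (1 - s - t) m + s δ_x + t δ_y`, for `(s, t)` in the triangle `0 ≤ s`,
`0 ≤ t`, `s + t < 1`. The normalization `∫ δF(μ, ·) dμ = 0` gives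
`∫ δF(μ, ·) dm = -(s δF(μ, x) + t δF(μ, y)) / (1 - s - t)`,
so the partial derivatives of `(s, t) ↦ F (μ (s, t))` are explicit functions of `δF(μ, x)` and
`δF(μ, y)`; in the same way those of `δF(μ, x)` and `δF(μ, y)` are explicit in the values of `δ²F`.
Hence `F ∘ μ` is twice differentiable at the corner `(0, 0)`, where its two mixed derivatives are
`δ²F(m, x, y) + δF(m, y)` and `δ²F(m, y, x) + δF(m, x)`.
-/

section Calculus

theorem hasFDerivWithinAt_of_sub_eq_intervalIntegral {E F : Type*} [NormedAddCommGroup E]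
    [NormedSpace ℝ E] [NormedAddCommGroup F] [NormedSpace ℝ F] [CompleteSpace F] {S : Set E}
    {f : E → F} {f' : E → E →L[ℝ] F} {p : E} (hS : Convex ℝ S) (hf' : ContinuousOn f' S)
    (hp : p ∈ S)
    (h : ∀ q ∈ S, f q - f p = ∫ t in (0 : ℝ)..1, f' ((1 - t) • p + t • q) (q - p)) :
    HasFDerivWithinAt f (f' p) S p := by
  refine .of_isLittleO (Asymptotics.isLittleO_iff.2 fun ε hε => ?_)
  obtain ⟨δ, hδ, hclose⟩ := Metric.continuousWithinAt_iff.1 (hf' p hp) ε hε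
  filter_upwards [self_mem_nhdsWithin, mem_nhdsWithin_of_mem_nhds (Metric.ball_mem_nhds p hδ)]
    with q hq hqδ
  have hseg : ∀ t ∈ Set.Icc (0 : ℝ) 1, (1 - t) • p + t • q ∈ S ∩ Metric.ball p δ := fun t ht =>
    (hS.inter (convex_ball p δ)) ⟨hp, Metric.mem_ball_self hδ⟩ ⟨hq, hqδ⟩
      (sub_nonneg.2 ht.2) ht.1 (sub_add_cancel 1 t)
  have hcont : ContinuousOn (fun t : ℝ => f' ((1 - t) • p + t • q) (q - p)) (Set.uIcc 0 1) := by
    rw [Set.uIcc_of_le zero_le_one]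
    exact (hf'.comp (by fun_prop) fun t ht => (hseg t ht).1).clm_apply continuousOn_const
  calc ‖f q - f p - f' p (q - p)‖
      = ‖∫ t in (0 : ℝ)..1, (f' ((1 - t) • p + t • q) - f' p) (q - p)‖ := by
        simp only [_root_.sub_apply]
        rw [h q hq, intervalIntegral.integral_sub hcont.intervalIntegrable
          intervalIntegrable_const, intervalIntegral.integral_const, sub_zero, one_smul]
    _ ≤ ε * ‖q - p‖ * |1 - 0| := by
        refine intervalIntegral.norm_integral_le_of_norm_le_const fun t ht => ?_
        rw [Set.uIoc_of_le zero_le_one] at ht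
        obtain ⟨htS, htδ⟩ := hseg t ⟨ht.1.le, ht.2⟩
        refine (f' _ - f' p).le_of_opNorm_le ?_ (q - p)
        rw [← dist_eq_norm]
        exact (hclose htS htδ).le
    _ = ε * ‖q - p‖ := by rw [sub_zero, abs_one, mul_one]

end Calculus

section Wasserstein

theorem IsCoupling.add {π₁ π₂ : Measure (ℝ × ℝ)} {m₁ m₂ μ₁ μ₂ : Measure ℝ}
    (h₁ : IsCoupling π₁ m₁ μ₁) (h₂ : IsCoupling π₂ m₂ μ₂) :
    IsCoupling (π₁ + π₂) (m₁ + m₂) (μ₁ + μ₂) :=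
  ⟨by rw [Measure.map_add _ _ measurable_fst, h₁.1, h₂.1],
    by rw [Measure.map_add _ _ measurable_snd, h₁.2, h₂.2]⟩

theorem isCoupling_map_diag (m : Measure ℝ) : IsCoupling (m.map fun x => (x, x)) m m :=
  ⟨by rw [Measure.map_map measurable_fst (by fun_prop)]; exact Measure.map_id,
    by rw [Measure.map_map measurable_snd (by fun_prop)]; exact Measure.map_id⟩

theorem isCoupling_smul_prod {α β : Measure ℝ} [IsFiniteMeasure α] [IsFiniteMeasure β]
    (h : α Set.univ = β Set.univ) : IsCoupling ((α Set.univ)⁻¹ • α.prod β) α β := by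
  rcases eq_or_ne (α Set.univ) 0 with h0 | h0
  · obtain rfl : α = 0 := Measure.measure_univ_eq_zero.1 h0
    obtain rfl : β = 0 := Measure.measure_univ_eq_zero.1 (h ▸ h0)
    simp [IsCoupling]
  · have hcancel : (α Set.univ)⁻¹ * α Set.univ = 1 := ENNReal.inv_mul_cancel h0 (measure_ne_top α _)
    exact ⟨by rw [Measure.map_smul, Measure.map_fst_prod, smul_smul, ← h, hcancel, one_smul],
      by rw [Measure.map_smul, Measure.map_snd_prod, smul_smul, hcancel, one_smul]⟩

theorem W1_le_of_isCoupling {π : Measure (ℝ × ℝ)} {m μ : Measure ℝ} (h : IsCoupling π m μ) :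
    W1 m μ ≤ ∫ p, |p.1 - p.2| ∂π := by
  refine csInf_le ⟨0, ?_⟩ ⟨π, h, rfl⟩
  rintro c ⟨π', _, rfl⟩
  exact integral_nonneg fun p => abs_nonneg _

theorem W1_nonneg (m μ : Measure ℝ) : 0 ≤ W1 m μ := by
  refine Real.sInf_nonneg ?_
  rintro c ⟨π, _, rfl⟩
  exact integral_nonneg fun p => abs_nonneg _

theorem integral_map_diag_abs_sub (m : Measure ℝ) :
    ∫ p, |p.1 - p.2| ∂(m.map fun x => (x, x)) = 0 := by
  rw [integral_map (by fun_prop) (by fun_prop)]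
  simp

theorem W1_self (m : Measure ℝ) : W1 m m = 0 :=
  ((W1_le_of_isCoupling (isCoupling_map_diag m)).trans_eq (integral_map_diag_abs_sub m)).antisymm
    (W1_nonneg m m)

theorem integrable_abs_sub_prod {α β : Measure ℝ} [IsFiniteMeasure α] [IsFiniteMeasure β]
    (hα : Integrable (fun x => |x|) α) (hβ : Integrable (fun x => |x|) β) :
    Integrable (fun p : ℝ × ℝ => |p.1 - p.2|) (α.prod β) :=
  ((hα.comp_fst β).add (hβ.comp_snd α)).mono' (by fun_prop)
    (.of_forall fun p => by simpa using abs_sub p.1 p.2)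

theorem integral_abs_sub_prod_le {α β : Measure ℝ} [IsFiniteMeasure α] [IsFiniteMeasure β]
    (hα : Integrable (fun x => |x|) α) (hβ : Integrable (fun x => |x|) β) :
    ∫ p, |p.1 - p.2| ∂α.prod β ≤
      β.real Set.univ * ∫ x, |x| ∂α + α.real Set.univ * ∫ x, |x| ∂β := by
  calc ∫ p, |p.1 - p.2| ∂α.prod β
      ≤ ∫ p, (|p.1| + |p.2|) ∂α.prod β :=
        integral_mono (integrable_abs_sub_prod hα hβ) ((hα.comp_fst β).add (hβ.comp_snd α))
          fun p => abs_sub p.1 p.2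
    _ = _ := by
        rw [integral_add (hα.comp_fst β) (hβ.comp_snd α), integral_fun_fst (fun x => |x|),
          integral_fun_snd (fun x => |x|), smul_eq_mul, smul_eq_mul]

theorem W1_add_left_le {ρ α β : Measure ℝ} [IsFiniteMeasure ρ] [IsFiniteMeasure α]
    [IsFiniteMeasure β] (h : α Set.univ = β Set.univ) (hα : Integrable (fun x => |x|) α)
    (hβ : Integrable (fun x => |x|) β) :
    W1 (ρ + α) (ρ + β) ≤ ∫ x, |x| ∂α + ∫ x, |x| ∂β := by
  have hreal : β.real Set.univ = α.real Set.univ := by simp only [measureReal_def, h]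
  have hint := integrable_abs_sub_prod hα hβ
  -- Leave the common part `ρ` in place and couple the remainders `α` and `β` independently.
  calc W1 (ρ + α) (ρ + β)
      ≤ ∫ p, |p.1 - p.2| ∂(ρ.map (fun x => (x, x)) + (α Set.univ)⁻¹ • α.prod β) :=
        W1_le_of_isCoupling ((isCoupling_map_diag ρ).add (isCoupling_smul_prod h))
    _ ≤ ∫ x, |x| ∂α + ∫ x, |x| ∂β := ?_
  rcases eq_or_ne (α Set.univ) 0 with h0 | h0
  · obtain rfl : α = 0 := Measure.measure_univ_eq_zero.1 h0
    obtain rfl : β = 0 := Measure.measure_univ_eq_zero.1 (h ▸ h0)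
    simp [integral_map_diag_abs_sub]
  · have hpos : 0 < α.real Set.univ := ENNReal.toReal_pos h0 (measure_ne_top α _)
    rw [integral_add_measure
        ((integrable_map_measure (by fun_prop) (by fun_prop)).2 (by simp [Function.comp_def]))
        (hint.smul_measure (ENNReal.inv_ne_top.2 h0)),
      integral_map_diag_abs_sub, zero_add, integral_smul_measure, ENNReal.toReal_inv, smul_eq_mul,
      ← measureReal_def, inv_mul_le_iff₀ hpos, mul_add]
    simpa only [hreal] using integral_abs_sub_prod_le hα hβ

end Wasserstein

section Mixture

variable {ι : Type*} [Fintype ι]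

/-- The mixture of the measures `ν i` with real weights `w i`. It is meant for nonnegative weights;
negative ones count as zero. -/
noncomputable def mixture {α : Type*} [MeasurableSpace α] (ν : ι → Measure α) (w : ι → ℝ) :
    Measure α :=
  ∑ i, ENNReal.ofReal (w i) • ν i

section MeasurableSpace

variable {α : Type*} [MeasurableSpace α] {ν : ι → Measure α} {w w' : ι → ℝ}

theorem mixture_add (hw : 0 ≤ w) (hw' : 0 ≤ w') :
    mixture ν (w + w') = mixture ν w + mixture ν w' := by
  simp only [mixture, Pi.add_apply, ENNReal.ofReal_add (hw _) (hw' _), add_smul,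
    Finset.sum_add_distrib]

theorem ofReal_smul_mixture {c : ℝ} (hc : 0 ≤ c) :
    ENNReal.ofReal c • mixture ν w = mixture ν (c • w) := by
  simp only [mixture, Finset.smul_sum, smul_smul, Pi.smul_apply, smul_eq_mul, ENNReal.ofReal_mul hc]

theorem mixture_apply_univ [∀ i, IsProbabilityMeasure (ν i)] (hw : 0 ≤ w) :
    mixture ν w Set.univ = ENNReal.ofReal (∑ i, w i) := by
  simp [mixture, ENNReal.ofReal_sum_of_nonneg fun i _ => hw i]

instance isFiniteMeasure_mixture [∀ i, IsFiniteMeasure (ν i)] : IsFiniteMeasure (mixture ν w) := by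
  have (i : ι) : IsFiniteMeasure (ENNReal.ofReal (w i) • ν i) :=
    (ν i).smul_finite ENNReal.ofReal_ne_top
  unfold mixture
  infer_instance

theorem integrable_mixture {E : Type*} [NormedAddCommGroup E] {f : α → E}
    (hf : ∀ i, Integrable f (ν i)) : Integrable f (mixture ν w) :=
  integrable_finsetSum_measure.2 fun i _ => (hf i).smul_measure ENNReal.ofReal_ne_top

theorem integral_mixture {E : Type*} [NormedAddCommGroup E] [NormedSpace ℝ E] {f : α → E}
    (hw : 0 ≤ w) (hf : ∀ i, Integrable f (ν i)) :
    ∫ x, f x ∂mixture ν w = ∑ i, w i • ∫ x, f x ∂ν i := by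
  rw [mixture, integral_finsetSum_measure fun i _ => (hf i).smul_measure ENNReal.ofReal_ne_top]
  simp only [integral_smul_measure, ENNReal.toReal_ofReal (hw _)]

end MeasurableSpace

variable {ν : ι → Measure ℝ} {w w' : ι → ℝ}

theorem lineSeg_mixture (hw : 0 ≤ w) (hw' : 0 ≤ w') {t : ℝ} (ht : t ∈ Set.Icc (0 : ℝ) 1) :
    lineSeg (mixture ν w) (mixture ν w') t = mixture ν ((1 - t) • w + t • w') := by
  have ht' : 0 ≤ 1 - t := sub_nonneg.2 ht.2
  rw [lineSeg, ofReal_smul_mixture ht', ofReal_smul_mixture ht.1,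
    mixture_add (smul_nonneg ht' hw) (smul_nonneg ht.1 hw')]

theorem memP1_mixture (hν : ∀ i, MemP1 (ν i)) (hw : w ∈ stdSimplex ℝ ι) : MemP1 (mixture ν w) := by
  have (i : ι) : IsProbabilityMeasure (ν i) := (hν i).1
  exact ⟨⟨by rw [mixture_apply_univ hw.1, hw.2, ENNReal.ofReal_one]⟩,
    integrable_mixture fun i => (hν i).2⟩

theorem W1_mixture_le (hν : ∀ i, MemP1 (ν i)) (hw : w ∈ stdSimplex ℝ ι)
    (hw' : w' ∈ stdSimplex ℝ ι) :
    W1 (mixture ν w) (mixture ν w') ≤ ∑ i, |w i - w' i| * ∫ x, |x| ∂ν i := by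
  have (i : ι) : IsProbabilityMeasure (ν i) := (hν i).1
  have hcommon : 0 ≤ w ⊓ w' := le_inf hw.1 hw'.1
  have hα : 0 ≤ w - w ⊓ w' := sub_nonneg.2 inf_le_left
  have hβ : 0 ≤ w' - w ⊓ w' := sub_nonneg.2 inf_le_right
  have hmass : mixture ν (w - w ⊓ w') Set.univ = mixture ν (w' - w ⊓ w') Set.univ := by
    simp only [mixture_apply_univ hα, mixture_apply_univ hβ, Pi.sub_apply, Finset.sum_sub_distrib,
      hw.2, hw'.2]
  have hint (i : ι) : Integrable (fun x => |x|) (ν i) := (hν i).2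
  calc W1 (mixture ν w) (mixture ν w')
      = W1 (mixture ν (w ⊓ w') + mixture ν (w - w ⊓ w'))
          (mixture ν (w ⊓ w') + mixture ν (w' - w ⊓ w')) := by
        rw [← mixture_add hcommon hα, ← mixture_add hcommon hβ, add_sub_cancel, add_sub_cancel]
    _ ≤ ∫ x, |x| ∂mixture ν (w - w ⊓ w') + ∫ x, |x| ∂mixture ν (w' - w ⊓ w') :=
        W1_add_left_le hmass (integrable_mixture hint) (integrable_mixture hint)
    _ = ∑ i, |w i - w' i| * ∫ x, |x| ∂ν i := by
        rw [integral_mixture hα hint, integral_mixture hβ hint, ← Finset.sum_add_distrib]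
        refine Finset.sum_congr rfl fun i _ => ?_
        have habs : w i - w i ⊓ w' i + (w' i - w i ⊓ w' i) = |w i - w' i| := by
          linarith [max_sub_min_eq_abs' (w i) (w' i), min_add_max (w i) (w' i)]
        rw [← add_smul, ← habs]
        rfl

theorem continuousOn_comp_mixture {G : Measure ℝ → ℝ} (hG : ∀ m, MemP1 m → W1ContinuousAt G m)
    (hν : ∀ i, MemP1 (ν i)) : ContinuousOn (fun w => G (mixture ν w)) (stdSimplex ℝ ι) := by
  intro w hw
  refine Metric.tendsto_nhds.2 fun ε hε => ?_
  obtain ⟨η, hη, hclose⟩ := hG _ (memP1_mixture hν hw) ε hε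
  have hbound : Tendsto (fun w' => ∑ i, |w' i - w i| * ∫ x, |x| ∂ν i) (𝓝 w) (𝓝 0) := by
    have hcont : Continuous fun w' : ι → ℝ => ∑ i, |w' i - w i| * ∫ x, |x| ∂ν i := by fun_prop
    simpa using hcont.tendsto w
  filter_upwards [self_mem_nhdsWithin, (hbound.eventually_lt_const hη).filter_mono inf_le_left]
    with w' hw' hlt
  exact hclose _ (memP1_mixture hν hw') ((W1_mixture_le hν hw' hw).trans_lt hlt)

end Mixture

section DerivVersion

variable {G : Measure ℝ → ℝ} {H : Measure ℝ → ℝ → ℝ}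

theorem w1Compact_singleton {m : Measure ℝ} (hm : MemP1 m) : W1Compact {m} := by
  refine ⟨fun μ hμ => hμ ▸ hm, fun u hu => ⟨m, rfl, id, strictMono_id, ?_⟩⟩
  simp [Set.mem_singleton_iff.1 (hu _), W1_self]

theorem IsDerivVersion.integrable (hH : IsDerivVersion G H) {m ν : Measure ℝ} (hm : MemP1 m)
    (hν : MemP1 ν) : Integrable (H m) ν := by
  have := hν.1
  obtain ⟨C, -, hC⟩ := hH.2.1 {m} (w1Compact_singleton hm)
  exact (((integrable_const 1).add hν.2).const_mul C).mono'
    hH.1.of_uncurry_left.aestronglyMeasurable (.of_forall (hC m rfl))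

theorem IsDerivVersion.mixture_sub_mixture_eq_integral {ι : Type*} [Fintype ι]
    {ν : ι → Measure ℝ} {w w' : ι → ℝ} (hH : IsDerivVersion G H) (hν : ∀ i, MemP1 (ν i))
    (hw : w ∈ stdSimplex ℝ ι) (hw' : w' ∈ stdSimplex ℝ ι) :
    G (mixture ν w') - G (mixture ν w) =
      ∫ t in (0 : ℝ)..1, ∑ i, (w' i - w i) * ∫ x, H (mixture ν ((1 - t) • w + t • w')) x ∂ν i := by
  rw [hH.2.2 _ _ (memP1_mixture hν hw') (memP1_mixture hν hw)]
  refine intervalIntegral.integral_congr fun t ht => ?_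
  rw [Set.uIcc_of_le zero_le_one] at ht
  have hmem : (1 - t) • w + t • w' ∈ stdSimplex ℝ ι :=
    convex_stdSimplex ℝ ι hw hw' (sub_nonneg.2 ht.2) ht.1 (sub_add_cancel 1 t)
  have hint i := hH.integrable (memP1_mixture hν hmem) (hν i)
  simp only [dInt, lineSeg_mixture hw.1 hw'.1 ht, integral_mixture hw.1 hint,
    integral_mixture hw'.1 hint, smul_eq_mul, sub_mul, Finset.sum_sub_distrib]

theorem IsCanonicalDeriv.sum_mul_integral_eq_zero {ι : Type*} [Fintype ι] {ν : ι → Measure ℝ}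
    {w : ι → ℝ} (hH : IsCanonicalDeriv G H) (hν : ∀ i, MemP1 (ν i)) (hw : w ∈ stdSimplex ℝ ι) :
    ∑ i, w i * ∫ x, H (mixture ν w) x ∂ν i = 0 := by
  have hmem := memP1_mixture hν hw
  rw [← hH.2 _ hmem, integral_mixture hw.1 fun i => hH.1.integrable hmem (hν i)]
  rfl

end DerivVersion

section WeightTriangle

/-- The parameters `(s, t)` for which `(1 - s - t, s, t)` are barycentric weights with positive
first weight, so that one may divide by `1 - s - t`. -/
def weightTriangle : Set (ℝ × ℝ) := {p | 0 ≤ p.1 ∧ 0 ≤ p.2 ∧ p.1 + p.2 < 1}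

theorem convex_weightTriangle : Convex ℝ weightTriangle := by
  have hfst := convex_halfSpace_ge (LinearMap.fst ℝ ℝ ℝ).isLinear 0
  have hsnd := convex_halfSpace_ge (LinearMap.snd ℝ ℝ ℝ).isLinear 0
  have hsum := convex_halfSpace_lt (LinearMap.fst ℝ ℝ ℝ + LinearMap.snd ℝ ℝ ℝ).isLinear 1
  exact hfst.inter (hsnd.inter hsum)

theorem interior_weightTriangle_nonempty : (interior weightTriangle).Nonempty := by
  have hopen : IsOpen {p : ℝ × ℝ | 0 < p.1 ∧ 0 < p.2 ∧ p.1 + p.2 < 1} :=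
    (isOpen_lt continuous_const continuous_fst).inter
      ((isOpen_lt continuous_const continuous_snd).inter
        (isOpen_lt (continuous_fst.add continuous_snd) continuous_const))
  exact ⟨(1 / 4, 1 / 4), mem_interior.2
    ⟨_, fun p hp => ⟨hp.1.le, hp.2.1.le, hp.2.2⟩, hopen, by norm_num⟩⟩

theorem zero_mem_weightTriangle : (0 : ℝ × ℝ) ∈ weightTriangle := by
  simp [weightTriangle]

/-- The differential at `p = (s, t)` of a functional along the mixtures `(1 - s - t) m + s μ + t ν`,
when its canonical derivative has means `c.1` and `c.2` under `μ` and `ν`. The normalization of the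
derivative forces its mean under `m` to be `-(s * c.1 + t * c.2) / (1 - s - t)`. -/
noncomputable def normalizedForm (p c : ℝ × ℝ) : ℝ × ℝ →L[ℝ] ℝ :=
  c.1 • .fst ℝ ℝ ℝ + c.2 • .snd ℝ ℝ ℝ +
    ((p.1 * c.1 + p.2 * c.2) / (1 - p.1 - p.2)) • (.fst ℝ ℝ ℝ + .snd ℝ ℝ ℝ)

theorem normalizedForm_apply (p c v : ℝ × ℝ) :
    normalizedForm p c v =
      c.1 * v.1 + c.2 * v.2 + (p.1 * c.1 + p.2 * c.2) / (1 - p.1 - p.2) * (v.1 + v.2) := rfl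

theorem continuousOn_normalizedForm {c : ℝ × ℝ → ℝ × ℝ} (hc : ContinuousOn c weightTriangle) :
    ContinuousOn (fun p => normalizedForm p (c p)) weightTriangle := by
  have hne : ∀ p ∈ weightTriangle, 1 - p.1 - p.2 ≠ 0 := fun p hp => by linarith [hp.2.2]
  unfold normalizedForm
  fun_prop (disch := assumption)

theorem hasFDerivWithinAt_normalizedForm_zero {S : Set (ℝ × ℝ)} {c : ℝ × ℝ → ℝ × ℝ}
    {a' b' : ℝ × ℝ →L[ℝ] ℝ} (ha : HasFDerivWithinAt (fun p => (c p).1) a' S 0)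
    (hb : HasFDerivWithinAt (fun p => (c p).2) b' S 0) :
    HasFDerivWithinAt (fun p => normalizedForm p (c p))
      (a'.smulRight (.fst ℝ ℝ ℝ) + b'.smulRight (.snd ℝ ℝ ℝ) +
        (normalizedForm 0 (c 0)).smulRight (.fst ℝ ℝ ℝ + .snd ℝ ℝ ℝ)) S 0 := by
  have hratio : HasFDerivWithinAt (fun p => (p.1 * (c p).1 + p.2 * (c p).2) / (1 - p.1 - p.2))
      (normalizedForm 0 (c 0)) S 0 := by
    have hnum := (hasFDerivWithinAt_fst.mul ha).add (hasFDerivWithinAt_snd.mul hb)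
    have hden := ((hasFDerivWithinAt_fst (𝕜 := ℝ) (s := S) (p := (0 : ℝ × ℝ))).const_sub 1).sub
      hasFDerivWithinAt_snd
    refine (hnum.fun_mul
      ((hasDerivAt_inv (by simp)).comp_hasFDerivWithinAt 0 hden)).congr_fderiv ?_
    ext <;> simp [normalizedForm]
  exact ((ha.smul_const _).add (hb.smul_const _)).add
    (hratio.smul_const (ContinuousLinearMap.fst ℝ ℝ ℝ + ContinuousLinearMap.snd ℝ ℝ ℝ))

theorem mixed_partials_of_hasFDerivWithinAt_normalizedForm {φ : ℝ × ℝ → ℝ} {c : ℝ × ℝ → ℝ × ℝ}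
    {a' b' : ℝ × ℝ →L[ℝ] ℝ}
    (hφ : ∀ p ∈ weightTriangle, HasFDerivWithinAt φ (normalizedForm p (c p)) weightTriangle p)
    (ha : HasFDerivWithinAt (fun p => (c p).1) a' weightTriangle 0)
    (hb : HasFDerivWithinAt (fun p => (c p).2) b' weightTriangle 0) :
    a' (0, 1) + (c 0).2 = b' (1, 0) + (c 0).1 := by
  have hsymm := convex_weightTriangle.second_derivative_within_at_symmetric
    interior_weightTriangle_nonempty
    (fun p hp => (hφ p (interior_subset hp)).hasFDerivAt (mem_interior_iff_mem_nhds.1 hp))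
    zero_mem_weightTriangle
    ((hasFDerivWithinAt_normalizedForm_zero ha hb).mono interior_subset) (0, 1) (1, 0)
  simpa [normalizedForm_apply] using hsymm

end WeightTriangle

section Barycentric

/-- The weights on three measures parametrized by `(s, t)`, which make `weightTriangle` a chart of
the standard simplex around its vertex `0`. -/
def barycentricWeights (p : ℝ × ℝ) : Fin 3 → ℝ := ![1 - p.1 - p.2, p.1, p.2]

theorem barycentricWeights_mem_stdSimplex {p : ℝ × ℝ} (hp : p ∈ weightTriangle) :
    barycentricWeights p ∈ stdSimplex ℝ (Fin 3) := by
  obtain ⟨h₁, h₂, h₃⟩ := hp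
  refine ⟨fun i => ?_, ?_⟩
  · fin_cases i
    exacts [show 0 ≤ 1 - p.1 - p.2 by linarith, h₁, h₂]
  · rw [Fin.sum_univ_three]
    change 1 - p.1 - p.2 + p.1 + p.2 = 1
    ring

theorem continuous_barycentricWeights : Continuous barycentricWeights :=
  continuous_pi fun i => by
    fin_cases i
    exacts [(continuous_const.sub continuous_fst).sub continuous_snd, continuous_fst,
      continuous_snd]

theorem barycentricWeights_convexCombo (p q : ℝ × ℝ) (t : ℝ) :
    (1 - t) • barycentricWeights p + t • barycentricWeights q =
      barycentricWeights ((1 - t) • p + t • q) := by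
  ext i
  fin_cases i
  · change (1 - t) * (1 - p.1 - p.2) + t * (1 - q.1 - q.2) =
      1 - ((1 - t) * p.1 + t * q.1) - ((1 - t) * p.2 + t * q.2)
    ring
  · rfl
  · rfl

theorem mixture_barycentricWeights_zero {α : Type*} [MeasurableSpace α] (ν : Fin 3 → Measure α) :
    mixture ν (barycentricWeights 0) = ν 0 := by
  simp [mixture, barycentricWeights, Fin.sum_univ_three]

theorem sum_sub_mul_eq_normalizedForm {r : ℝ × ℝ} (hr : r ∈ weightTriangle) {I : Fin 3 → ℝ}
    (hI : ∑ i, barycentricWeights r i * I i = 0) (p q : ℝ × ℝ) :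
    ∑ i, (barycentricWeights q i - barycentricWeights p i) * I i =
      normalizedForm r (I 1, I 2) (q - p) := by
  have hne : 1 - r.1 - r.2 ≠ 0 := by linarith [hr.2.2]
  simp only [Fin.sum_univ_three, barycentricWeights, Matrix.cons_val] at hI ⊢
  have hI₀ : (r.1 * I 1 + r.2 * I 2) / (1 - r.1 - r.2) = -I 0 := by
    rw [div_eq_iff hne]
    linarith
  rw [normalizedForm_apply, hI₀, Prod.fst_sub, Prod.snd_sub]
  ring

variable {ν : Fin 3 → Measure ℝ}

theorem continuousOn_comp_mixture_barycentricWeights {G : Measure ℝ → ℝ}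
    (hG : ∀ m, MemP1 m → W1ContinuousAt G m) (hν : ∀ i, MemP1 (ν i)) :
    ContinuousOn (fun p => G (mixture ν (barycentricWeights p))) weightTriangle :=
  (continuousOn_comp_mixture hG hν).comp continuous_barycentricWeights.continuousOn
    fun _ => barycentricWeights_mem_stdSimplex

theorem IsCanonicalDeriv.hasFDerivWithinAt_mixture {G : Measure ℝ → ℝ} {H : Measure ℝ → ℝ → ℝ}
    (hH : IsCanonicalDeriv G H) (hν : ∀ i, MemP1 (ν i))
    (hcont : ∀ i ≠ 0, ContinuousOn (fun p => ∫ x, H (mixture ν (barycentricWeights p)) x ∂ν i)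
      weightTriangle) {p : ℝ × ℝ} (hp : p ∈ weightTriangle) :
    HasFDerivWithinAt (fun p => G (mixture ν (barycentricWeights p)))
      (normalizedForm p (∫ x, H (mixture ν (barycentricWeights p)) x ∂ν 1,
        ∫ x, H (mixture ν (barycentricWeights p)) x ∂ν 2)) weightTriangle p := by
  refine hasFDerivWithinAt_of_sub_eq_intervalIntegral convex_weightTriangle
    (continuousOn_normalizedForm ((hcont 1 (by decide)).prodMk (hcont 2 (by decide)))) hp
    fun q hq => ?_
  rw [hH.1.mixture_sub_mixture_eq_integral hν (barycentricWeights_mem_stdSimplex hp)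
    (barycentricWeights_mem_stdSimplex hq)]
  refine intervalIntegral.integral_congr fun t ht => ?_
  rw [Set.uIcc_of_le zero_le_one] at ht
  have hmem : (1 - t) • p + t • q ∈ weightTriangle :=
    convex_weightTriangle hp hq (sub_nonneg.2 ht.2) ht.1 (sub_add_cancel 1 t)
  simp only [barycentricWeights_convexCombo]
  exact sum_sub_mul_eq_normalizedForm hmem
    (hH.sum_mul_integral_eq_zero hν (barycentricWeights_mem_stdSimplex hmem)) p q

end Barycentric

theorem memP1_dirac (x : ℝ) : MemP1 (Measure.dirac x) :=
  ⟨inferInstance, integrable_dirac (by simp)⟩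

theorem stmt14_general {F : Measure ℝ → ℝ} {δF : Measure ℝ → ℝ → ℝ}
    {δ2F : Measure ℝ → ℝ → ℝ → ℝ} (hF : IsCanonicalDeriv F δF)
    (hδF : ∀ x, IsCanonicalDeriv (fun m => δF m x) (fun m y => δ2F m x y))
    (hδ2F : ∀ x y m, MemP1 m → W1ContinuousAt (fun μ => δ2F μ x y) m)
    {m : Measure ℝ} (hm : MemP1 m) (x y : ℝ) :
    δ2F m x y - δF m x = δ2F m y x - δF m y := by
  let ν : Fin 3 → Measure ℝ := ![m, .dirac x, .dirac y]
  have hν : ∀ i, MemP1 (ν i) := by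
    simpa [ν, Fin.forall_fin_succ] using ⟨hm, memP1_dirac x, memP1_dirac y⟩
  have hderiv (a : ℝ) {p} (hp : p ∈ weightTriangle) := (hδF a).hasFDerivWithinAt_mixture hν
    (by simpa [ν, Fin.forall_fin_succ] using
      ⟨continuousOn_comp_mixture_barycentricWeights (hδ2F a x) hν,
        continuousOn_comp_mixture_barycentricWeights (hδ2F a y) hν⟩) hp
  have hcont (a : ℝ) : ContinuousOn (fun p => δF (mixture ν (barycentricWeights p)) a)
      weightTriangle := fun p hp => (hderiv a hp).continuousWithinAt
  have hmixed := mixed_partials_of_hasFDerivWithinAt_normalizedForm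
    (fun p hp => hF.hasFDerivWithinAt_mixture hν
      (by simpa [ν, Fin.forall_fin_succ] using ⟨hcont x, hcont y⟩) hp)
    (by simpa [ν] using hderiv x zero_mem_weightTriangle)
    (by simpa [ν] using hderiv y zero_mem_weightTriangle)
  simp only [normalizedForm_apply, mixture_barycentricWeights_zero, Matrix.cons_val_zero,
    Matrix.cons_val_one, Matrix.cons_val, integral_dirac, Prod.fst_zero, Prod.snd_zero, mul_zero,
    mul_one, zero_mul, zero_add, add_zero, sub_zero, div_one, ν] at hmixed
  linarith

/-- symmetry of the second-order derivative: for `F` of class `C²`,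
`δ²F(m,x,y) - δF(m,x) = δ²F(m,y,x) - δF(m,y)` for every `m ∈ P₁(ℝ)` and `x, y ∈ ℝ`. -/
theorem stmt14 (F : Measure ℝ → ℝ) (δF : Measure ℝ → ℝ → ℝ)
    (δ2F : Measure ℝ → ℝ → ℝ → ℝ) (hF : IsC2 F δF δ2F) :
    ∀ m, MemP1 m → ∀ x y : ℝ,
      δ2F m x y - δF m x = δ2F m y x - δF m y :=
  fun _ hm => stmt14_general hF.1 hF.2.1 hF.2.2.2.2.1 hm
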